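/- For n ≥ 1 let Gₙ = ⟨a₀, ..., aₙ | a_{i+1}(aᵢ a_{i+2}) a_{i+1}⁻¹ = (aᵢ a_{i+2})² for 0 ≤ i ≤ n−2⟩, regard G_{n−1} as the subgroup of Gₙ generated by a₀, ..., a_{n−1}, and set c = a_{n−1}. Then for every Y ∈ G_{n−1} that is not a power of c, and for all integers p, q, we have c^p Y c^q ≠ Y⁻¹ in Gₙ. -/

import Mathlib

namespace CondC

/-- The relators `a_{i+1} (aᵢ a_{i+2}) a_{i+1}⁻¹ ((aᵢ a_{i+2})²)⁻¹` for `0 ≤ i ≤ n - 2`,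
on the generators `a₀, …, aₙ`. -/
def grels (n : ℕ) : Set (FreeGroup (Fin (n + 1))) :=
  {r | ∃ (i : ℕ) (h : i + 2 ≤ n),
    r = FreeGroup.of ⟨i + 1, by omega⟩ *
        (FreeGroup.of ⟨i, by omega⟩ * FreeGroup.of ⟨i + 2, by omega⟩) *
        (FreeGroup.of ⟨i + 1, by omega⟩)⁻¹ *
        ((FreeGroup.of ⟨i, by omega⟩ * FreeGroup.of ⟨i + 2, by omega⟩) ^ 2)⁻¹}

/-- `Gₙ = ⟨a₀, …, aₙ | a_{i+1}(aᵢ a_{i+2})a_{i+1}⁻¹ = (aᵢ a_{i+2})², 0 ≤ i ≤ n-2⟩`. -/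
abbrev Gp (n : ℕ) : Type := PresentedGroup (grels n)

end CondC

/-
With `t = a_m a_{m+2}`, the group `G_{m+2}` is obtained from `G_{m+1}` by adjoining `t` subject to
`s t s⁻¹ = t²`, where `s = a_{m+1}`. Such an extension `G` of a group `A` inherits the uniqueness of
square roots from `A`, in the form `x y x = y → x = 1`. Indeed, the retraction `r : G → A` killing
`t` sends such an `x` to `1`, and `ker r` is the free product of the conjugates of a copy of
`ℤ[1/2]`, indexed by the cosets `i` of `⟨s⟩` in `A`. As in Magnus' theorem, `t ↦ 1 + ⟨s⟩` embeds
`ker r` in the units of the `ℚ`-algebra on these cosets with relations `i² = 0`, on which `A` acts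
by permuting the letters with positive weights `2 ^ χ`, where `χ : A → ℤ` and `χ s = 1`. If
`x - 1 ≠ 0` has lowest degree part `f`, then `x y x = y` says that `r y` sends `f` to `-f`. By
uniqueness of square roots in `A`, and since `χ s = 1`, an element of `A` whose square fixes a coset
fixes the coset itself. So the permutation of words induced by `r y` has no even minimal periods,
whereas signs alternate along its orbits in the support of `f`; hence `f = 0`.

Now `c^p Y c^q = Y⁻¹` says `(Y c^q)² = c^{q-p}`. A character with value `1` at `c` shows that
`q - p` is even, so `Y c^q`, and with it `Y`, is a power of `c`.
-/

namespace CondC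

section SquareRoots

variable {G : Type*} [Group G]

lemma sq_injective_iff_forall_mul_mul_eq :
    Function.Injective (fun x : G ↦ x ^ 2) ↔ ∀ x y : G, x * y * x = y → x = 1 := by
  constructor
  · intro hG x y hxy
    have hsq : (x * y) ^ 2 = y ^ 2 := by rw [sq, ← mul_assoc, hxy, sq]
    exact mul_eq_right.mp (hG hsq)
  · intro hG x y hxy
    have hxy' : x * x = y * y := by simpa only [sq] using hxy
    refine mul_inv_eq_one.mp (hG (x * y⁻¹) y ?_)
    rw [inv_mul_cancel_right, ← mul_assoc, hxy', mul_inv_cancel_right]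

lemma mem_zpowers_of_sq_mem_zpowers (hG : Function.Injective fun x : G ↦ x ^ 2)
    {χ : G →* Multiplicative ℤ} {c x : G} (hχ : χ c = .ofAdd 1)
    (hx : x ^ 2 ∈ Subgroup.zpowers c) : x ∈ Subgroup.zpowers c := by
  obtain ⟨k, hk⟩ := Subgroup.mem_zpowers_iff.mp hx
  have hk_even : k = (χ x).toAdd * 2 := by
    have := congrArg (fun g ↦ (χ g).toAdd) hk
    simpa [hχ, mul_comm] using this
  refine Subgroup.mem_zpowers_iff.mpr ⟨(χ x).toAdd, hG ?_⟩
  simpa only [hk_even, zpow_mul, zpow_ofNat] using hk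

lemma zpow_mul_mul_zpow_ne_inv (hG : Function.Injective fun x : G ↦ x ^ 2)
    {χ : G →* Multiplicative ℤ} {c y : G} (hχ : χ c = .ofAdd 1)
    (hy : y ∉ Subgroup.zpowers c) (p q : ℤ) : c ^ p * y * c ^ q ≠ y⁻¹ := by
  intro h
  have hsq : (y * c ^ q) ^ 2 = c ^ (q - p) := calc
    (y * c ^ q) ^ 2 = c ^ (-p) * (c ^ p * y * c ^ q) * y * c ^ q := by rw [sq]; group
    _ = c ^ (q - p) := by rw [h]; group
  have hroot : y * c ^ q ∈ Subgroup.zpowers c :=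
    mem_zpowers_of_sq_mem_zpowers hG hχ (hsq ▸ Subgroup.zpow_mem_zpowers c _)
  exact hy ((Subgroup.mul_mem_cancel_right _ (Subgroup.zpow_mem_zpowers c q)).mp hroot)

lemma smul_eq_of_sq_smul_eq (hG : Function.Injective fun x : G ↦ x ^ 2)
    {χ : G →* Multiplicative ℤ} {c : G} (hχ : χ c = .ofAdd 1) {u : G}
    {i : G ⧸ Subgroup.zpowers c} (h : u ^ 2 • i = i) : u • i = i := by
  obtain ⟨g, rfl⟩ := QuotientGroup.mk_surjective i
  rw [MulAction.Quotient.smul_mk, eq_comm, QuotientGroup.eq] at h ⊢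
  have hconj (v : G) : g⁻¹ * v • g = g⁻¹ * v * g⁻¹⁻¹ := by simp [mul_assoc]
  rw [hconj, ← conj_pow] at h
  rw [hconj]
  exact mem_zpowers_of_sq_mem_zpowers hG hχ h

end SquareRoots

section SignReversal

/-- Along a periodic orbit in the support the sign alternates, so the minimal period is even,
which `hσ` excludes. -/
lemma eq_zero_of_sign_apply_eq_neg_sign {X R : Type*} [Zero R] [LinearOrder R]
    {σ : X → X} (hσ_inj : Function.Injective σ)
    (hσ : ∀ n x, Function.IsPeriodicPt σ (n + n) x → Function.IsPeriodicPt σ n x)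
    {f : X →₀ R} (hf : ∀ x, SignType.sign (f (σ x)) = -SignType.sign (f x)) : f = 0 := by
  by_contra hne
  obtain ⟨x, hx⟩ := Finsupp.ne_iff.mp hne
  have hsign (n : ℕ) : SignType.sign (f (σ^[n] x)) = (-1) ^ n * SignType.sign (f x) := by
    induction n with
    | zero => simp
    | succ n ih => rw [Function.iterate_succ_apply', hf, ih, pow_succ]; simp
  have hmaps : Set.MapsTo σ f.support f.support := fun y hy ↦ by
    have hy' := sign_ne_zero.mpr (Finsupp.mem_support_iff.mp hy)
    exact Finsupp.mem_support_iff.mpr (sign_ne_zero.mp (by rwa [hf, Ne, SignType.neg_eq_zero_iff]))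
  have hper : x ∈ Function.periodicPts σ := by
    obtain ⟨n, hn, hn_per⟩ := Function.mem_periodicPts.mp <|
      (hmaps.restrict_inj.mpr hσ_inj.injOn).mem_periodicPts ⟨x, Finsupp.mem_support_iff.mpr hx⟩
    rw [Function.IsPeriodicPt, Function.IsFixedPt, hmaps.iterate_restrict] at hn_per
    exact Function.mk_mem_periodicPts hn (congrArg Subtype.val hn_per)
  have hpos := Function.minimalPeriod_pos_of_mem_periodicPts hper
  obtain ⟨m, hm⟩ | hodd := Nat.even_or_odd (Function.minimalPeriod σ x)
  · have hm_per := hσ m x (hm ▸ Function.isPeriodicPt_minimalPeriod σ x)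
    have := hm_per.minimalPeriod_le (by omega)
    omega
  · have := hsign (Function.minimalPeriod σ x)
    rw [Function.iterate_minimalPeriod, hodd.neg_one_pow, neg_one_mul,
      SignType.self_eq_neg_iff, sign_eq_zero_iff] at this
    exact hx this

end SignReversal

section WordModule

/-- The free module on all words in the alphabet `I`. Its alternating words, those without two
equal adjacent letters, span the algebra on generators `I` with relations `i ^ 2 = 0`; the other
words are carried along only to avoid a subtype, and every operator below kills or ignores them. -/
abbrev WordModule (K I : Type*) [CommRing K] : Type _ := List I →₀ K

variable {K I : Type*} [CommRing K]


open Classical in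
/-- The class of a word in the algebra with `i ^ 2 = 0`: zero unless the word alternates. -/
noncomputable def altWord (K : Type*) [CommRing K] (w : List I) : WordModule K I :=
  if w.IsChain (· ≠ ·) then Finsupp.single w 1 else 0

/-- Left multiplication by a letter in the algebra with `i ^ 2 = 0`. -/
noncomputable def letterMul (K : Type*) [CommRing K] (i : I) : Module.End K (WordModule K I) :=
  Finsupp.linearCombination K fun w ↦ altWord K (i :: w)

/-- Right multiplication by a word in the algebra with `i ^ 2 = 0`. -/
noncomputable def mulWord (K : Type*) [CommRing K] (v : List I) : Module.End K (WordModule K I) :=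
  Finsupp.linearCombination K fun w ↦ altWord K (w ++ v)

lemma altWord_of_isChain {w : List I} (hw : w.IsChain (· ≠ ·)) :
    altWord K w = Finsupp.single w 1 := if_pos hw

lemma altWord_of_not_isChain {w : List I} (hw : ¬w.IsChain (· ≠ ·)) : altWord K w = 0 := if_neg hw

lemma letterMul_single (i : I) (w : List I) :
    letterMul K i (Finsupp.single w 1) = altWord K (i :: w) := by
  simp only [letterMul, Finsupp.linearCombination_single, one_smul]

lemma mulWord_single (v w : List I) :
    mulWord K v (Finsupp.single w 1) = altWord K (w ++ v) := by
  simp only [mulWord, Finsupp.linearCombination_single, one_smul]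

lemma end_ext_single {T S : Module.End K (WordModule K I)}
    (h : ∀ w, T (Finsupp.single w 1) = S (Finsupp.single w 1)) : T = S :=
  Finsupp.lhom_ext' fun w ↦ LinearMap.ext_ring (h w)

lemma letterMul_altWord (i : I) (w : List I) :
    letterMul K i (altWord K w) = altWord K (i :: w) := by
  by_cases hw : w.IsChain (· ≠ ·)
  · rw [altWord_of_isChain hw, letterMul_single]
  · rw [altWord_of_not_isChain hw, altWord_of_not_isChain fun h ↦ hw h.tail, map_zero]

lemma mulWord_altWord_cons (i : I) (v w : List I) :
    mulWord K v (altWord K (i :: w)) = altWord K (i :: (w ++ v)) := by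
  by_cases hw : (i :: w).IsChain (· ≠ ·)
  · rw [altWord_of_isChain hw, mulWord_single, List.cons_append]
  · rw [altWord_of_not_isChain hw, altWord_of_not_isChain fun h ↦ hw ?_, map_zero]
    exact h.left_of_append (l₁ := i :: w)

lemma letterMul_mul_self (i : I) : letterMul K i * letterMul K i = 0 := by
  refine end_ext_single fun w ↦ ?_
  rw [Module.End.mul_apply, letterMul_single, letterMul_altWord, altWord_of_not_isChain (by simp),
    LinearMap.zero_apply]

lemma commute_letterMul_mulWord (i : I) (v : List I) :
    Commute (letterMul K i) (mulWord K v) := by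
  refine end_ext_single fun w ↦ ?_
  rw [Module.End.mul_apply, Module.End.mul_apply, letterMul_single, mulWord_single,
    letterMul_altWord, mulWord_altWord_cons]

open Classical in
lemma letterMul_apply_cons (i j : I) (f : WordModule K I) (u : List I) :
    letterMul K i f (j :: u) = if i = j ∧ (i :: u).IsChain (· ≠ ·) then f u else 0 := by
  induction f using Finsupp.induction_linear with
  | zero => simp
  | add f g hf hg => rw [map_add, Finsupp.add_apply, hf, hg]; split_ifs <;> simp
  | single w c =>
    rw [letterMul, Finsupp.linearCombination_single, altWord]
    by_cases hw : (i :: w).IsChain (· ≠ ·)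
    · rw [if_pos hw, Finsupp.smul_single_one, Finsupp.single_apply, Finsupp.single_apply]
      grind
    · rw [if_neg hw, smul_zero, Finsupp.zero_apply, Finsupp.single_apply]
      grind

/-- The one-parameter unipotent group `x ↦ 1 + x i` attached to a letter `i`. -/
noncomputable def unipotent (i : I) : Multiplicative K →* Module.End K (WordModule K I) where
  toFun x := 1 + x.toAdd • letterMul K i
  map_one' := by simp
  map_mul' x y := by
    simp only [toAdd_mul, mul_add, add_mul, one_mul, mul_one, smul_mul_smul_comm,
      letterMul_mul_self, smul_zero, add_smul]
    abel

lemma unipotent_ofAdd (i : I) (x : K) : unipotent i (.ofAdd x) = 1 + x • letterMul K i := rfl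

end WordModule

section Filtration

variable (K I : Type*) [CommRing K]

/-- The combinations of alternating words of length at least `d`. -/
noncomputable def wordFiltration (d : ℕ) : Submodule K (WordModule K I) :=
  Finsupp.supported K K {w | w.IsChain (· ≠ ·) ∧ d ≤ w.length}

/-- The operators raising the length of alternating words by at least `d`. -/
noncomputable def raisingOps (d : ℕ) : Submodule K (Module.End K (WordModule K I)) :=
  ⨅ e, (wordFiltration K I e).compatibleMaps (wordFiltration K I (e + d))

variable {K I}

lemma mem_wordFiltration {d : ℕ} {f : WordModule K I} :
    f ∈ wordFiltration K I d ↔ ∀ w, f w ≠ 0 → w.IsChain (· ≠ ·) ∧ d ≤ w.length := by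
  simp [wordFiltration, Finsupp.mem_supported, Set.subset_def]

lemma wordFiltration_antitone : Antitone (wordFiltration K I) := fun _ _ h ↦
  Finsupp.supported_mono fun _ hw ↦ ⟨hw.1, h.trans hw.2⟩

lemma altWord_mem_wordFiltration {d : ℕ} {w : List I} (hd : d ≤ w.length) :
    altWord K w ∈ wordFiltration K I d := by
  by_cases hw : w.IsChain (· ≠ ·)
  · rw [altWord_of_isChain hw]
    exact Finsupp.single_mem_supported K _ ⟨hw, hd⟩
  · rw [altWord_of_not_isChain hw]
    exact Submodule.zero_mem _

lemma single_nil_mem : Finsupp.single [] 1 ∈ wordFiltration K I 0 :=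
  Finsupp.single_mem_supported K _ ⟨.nil, le_rfl⟩

lemma eq_zero_of_forall_mem_wordFiltration {f : WordModule K I}
    (hf : ∀ d, f ∈ wordFiltration K I d) : f = 0 := by
  ext w
  by_contra hw
  have := (mem_wordFiltration.mp (hf (w.length + 1)) w hw).2
  omega

lemma mem_raisingOps {d : ℕ} {T : Module.End K (WordModule K I)} :
    T ∈ raisingOps K I d ↔ ∀ e, ∀ f ∈ wordFiltration K I e, T f ∈ wordFiltration K I (e + d) := by
  simp only [raisingOps, Submodule.mem_iInf]
  rfl

lemma mem_raisingOps_of_forall_single {d : ℕ} {T : Module.End K (WordModule K I)}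
    (hT : ∀ w : List I, w.IsChain (· ≠ ·) →
      T (Finsupp.single w 1) ∈ wordFiltration K I (w.length + d)) : T ∈ raisingOps K I d := by
  refine mem_raisingOps.mpr fun e ↦ ?_
  change wordFiltration K I e ≤ (wordFiltration K I (e + d)).comap T
  rw [wordFiltration, Finsupp.supported_eq_span_single, Submodule.span_le]
  rintro _ ⟨w, ⟨hw, he⟩, rfl⟩
  exact wordFiltration_antitone (Nat.add_le_add_right he d) (hT w hw)

lemma mul_mem_raisingOps {d e k : ℕ} {T S : Module.End K (WordModule K I)}
    (hT : T ∈ raisingOps K I d) (hS : S ∈ raisingOps K I e) (hk : k ≤ d + e) :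
    T * S ∈ raisingOps K I k :=
  mem_raisingOps.mpr fun l f hf ↦
    wordFiltration_antitone (by omega) (mem_raisingOps.mp hT _ _ (mem_raisingOps.mp hS l f hf))

lemma letterMul_mem_raisingOps (i : I) : letterMul K i ∈ raisingOps K I 1 :=
  mem_raisingOps_of_forall_single fun w _ ↦ by
    rw [letterMul_single]
    exact altWord_mem_wordFiltration (by simp)

lemma mulWord_mem_raisingOps (v : List I) : mulWord K v ∈ raisingOps K I v.length :=
  mem_raisingOps_of_forall_single fun w _ ↦ by
    rw [mulWord_single]
    exact altWord_mem_wordFiltration (by simp)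

/-- An operator commuting with right multiplications is determined by its value at the empty
word. -/
lemma mem_raisingOps_of_commute_mulWord {d : ℕ} {T : Module.End K (WordModule K I)}
    (hT : ∀ v, Commute T (mulWord K v))
    (h : T (Finsupp.single [] 1) ∈ wordFiltration K I d) : T ∈ raisingOps K I d :=
  mem_raisingOps_of_forall_single fun w hw ↦ by
    have hw_mul : Finsupp.single w 1 = mulWord K w (Finsupp.single [] 1) := by
      rw [mulWord_single, List.nil_append, altWord_of_isChain hw]
    rw [hw_mul, ← Module.End.mul_apply, hT w, Module.End.mul_apply, add_comm]
    exact mem_raisingOps.mp (mulWord_mem_raisingOps w) _ _ h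

variable (K I) in
/-- The operators of left multiplication by an element with constant term `1` of the algebra with
`i ^ 2 = 0`. Left multiplications are encoded as the operators commuting with all right
multiplications. -/
noncomputable def oneAddMul : Submonoid (Module.End K (WordModule K I)) where
  carrier := {T | ∃ N ∈ raisingOps K I 1, (∀ v, Commute N (mulWord K v)) ∧ T = 1 + N}
  one_mem' := ⟨0, Submodule.zero_mem _, fun v ↦ .zero_left _, (add_zero 1).symm⟩
  mul_mem' := by
    rintro _ _ ⟨N, hN, hN_comm, rfl⟩ ⟨N', hN', hN'_comm, rfl⟩
    refine ⟨N + N' + N * N', ?_,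
      fun v ↦ ((hN_comm v).add_left (hN'_comm v)).add_left ((hN_comm v).mul_left (hN'_comm v)), ?_⟩
    · exact Submodule.add_mem _ (Submodule.add_mem _ hN hN')
        (mul_mem_raisingOps hN hN' one_le_two)
    · rw [mul_add, mul_one, add_mul, one_mul]
      abel

lemma unipotent_mem_oneAddMul (i : I) (x : Multiplicative K) : unipotent i x ∈ oneAddMul K I :=
  ⟨x.toAdd • letterMul K i, Submodule.smul_mem _ _ (letterMul_mem_raisingOps i),
    fun v ↦ (commute_letterMul_mulWord i v).smul_left _, rfl⟩

end Filtration

section Faithful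

open Monoid CoprodI

/-- The coefficient of `i₁ ⋯ iₖ` in `(1 + x₁ i₁) ⋯ (1 + xₖ iₖ)` is `x₁ ⋯ xₖ`, and no longer word
occurs. -/
lemma apply_prod_apply_map_fst {K I : Type*} [CommRing K] [IsDomain K] {M : I → Type*}
    [∀ i, Monoid (M i)] {ψ : CoprodI M →* Module.End K (WordModule K I)}
    (hψ : ∀ i, ∀ m : M i, m ≠ 1 → ∃ x ≠ (0 : K), ψ (of m) = unipotent i (.ofAdd x))
    (w : Word M) :
    ψ w.prod (Finsupp.single [] 1) (w.toList.map Sigma.fst) ≠ 0 ∧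
      ∀ u : List I, w.toList.length < u.length → ψ w.prod (Finsupp.single [] 1) u = 0 := by
  classical
  induction w using Word.consRecOn with
  | empty =>
    rw [Word.prod_empty, map_one, Module.End.one_apply]
    refine ⟨by simp [Word.empty], fun u hu ↦ Finsupp.single_eq_of_ne ?_⟩
    rintro rfl
    exact absurd hu (Nat.not_lt_zero _)
  | cons i m w hw hm ih =>
    obtain ⟨x, hx, hψm⟩ := hψ i m hm
    have hchain : (i :: w.toList.map Sigma.fst).IsChain (· ≠ ·) :=
      (List.isChain_map Sigma.fst).mpr (Word.cons m w hw hm).chain_ne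
    have hlist : (Word.cons m w hw hm).toList = ⟨i, m⟩ :: w.toList := rfl
    rw [Word.prod_cons, map_mul, hψm, Module.End.mul_apply, hlist]
    set f := ψ w.prod (Finsupp.single [] 1)
    have hf (u : List I) : unipotent i (.ofAdd x) f u = f u + x * letterMul K i f u := rfl
    constructor
    · rw [hf, List.map_cons, letterMul_apply_cons, if_pos ⟨rfl, hchain⟩, ih.2 _ (by simp), zero_add]
      exact mul_ne_zero hx ih.1
    · rintro (_ | ⟨j, u⟩) hu
      · exact absurd hu (Nat.not_lt_zero _)
      · rw [List.length_cons, List.length_cons, Nat.add_lt_add_iff_right] at hu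
        rw [hf, letterMul_apply_cons, ih.2 _ (by simp; omega), ih.2 _ hu, ite_self, mul_zero,
          zero_add]

lemma eq_one_of_apply_single_nil {K I : Type*} [CommRing K] [IsDomain K] {M : I → Type*}
    [∀ i, Monoid (M i)] {ψ : CoprodI M →* Module.End K (WordModule K I)}
    (hψ : ∀ i, ∀ m : M i, m ≠ 1 → ∃ x ≠ (0 : K), ψ (of m) = unipotent i (.ofAdd x))
    {z : CoprodI M} (hz : ψ z (Finsupp.single [] 1) = Finsupp.single [] 1) : z = 1 := by
  classical
  obtain ⟨w, rfl⟩ : ∃ w : Word M, w.prod = z := ⟨Word.equiv z, Word.equiv.symm_apply_apply z⟩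
  have hcoeff := (apply_prod_apply_map_fst hψ w).1
  rw [hz, Finsupp.single_apply, ne_eq, ite_eq_right_iff, Classical.not_imp] at hcoeff
  have hempty : w = Word.empty := Word.ext (List.map_eq_nil_iff.mp hcoeff.1.symm)
  rw [hempty, Word.prod_empty]

end Faithful

section Relabel

variable {K A I : Type*} [CommRing K] [Group A] [MulAction A I]

/-- The action of `A` on the algebra with `i ^ 2 = 0` in which `a` sends the letter `i` to
`ω a • (a • i)`. -/
noncomputable def relabel (I : Type*) [MulAction A I] (ω : A →* K) :
    A →* Module.End K (WordModule K I) where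
  toFun a := Finsupp.linearCombination K
    fun w ↦ Finsupp.single (w.map (a • ·)) (ω a ^ w.length)
  map_one' := end_ext_single fun w ↦ by simp
  map_mul' a b := end_ext_single fun w ↦ by
    simp [mul_pow, mul_smul, mul_comm, Function.comp_def]

variable (ω : A →* K) (a : A)

lemma relabel_single (w : List I) :
    relabel I ω a (Finsupp.single w 1) = Finsupp.single (w.map (a • ·)) (ω a ^ w.length) := by
  simp [relabel]

lemma map_smul_injective : Function.Injective (List.map fun i : I ↦ a • i) :=
  List.map_injective_iff.mpr (MulAction.injective a)

lemma isChain_ne_map_smul {w : List I} :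
    (w.map (a • ·)).IsChain (· ≠ ·) ↔ w.IsChain (· ≠ ·) := by
  simp only [List.isChain_map, ne_eq, smul_left_cancel_iff]

lemma relabel_apply_map (f : WordModule K I) (w : List I) :
    relabel I ω a f (w.map (a • ·)) = ω a ^ w.length * f w := by
  classical
  induction f using Finsupp.induction_linear with
  | zero => simp
  | add f g hf hg => simp [hf, hg, mul_add]
  | single u c =>
    rw [← mul_one c, ← smul_eq_mul, ← Finsupp.smul_single, map_smul, relabel_single]
    simp only [Finsupp.smul_apply, Finsupp.single_apply, (map_smul_injective a).eq_iff, smul_eq_mul]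
    split_ifs with h
    · rw [h, mul_one, mul_comm]
    · simp

lemma relabel_altWord (w : List I) :
    relabel I ω a (altWord K w) = ω a ^ w.length • altWord K (w.map (a • ·)) := by
  by_cases hw : w.IsChain (· ≠ ·)
  · rw [altWord_of_isChain hw, altWord_of_isChain ((isChain_ne_map_smul a).mpr hw), relabel_single,
      Finsupp.smul_single_one]
  · rw [altWord_of_not_isChain hw, altWord_of_not_isChain (mt (isChain_ne_map_smul a).mp hw),
      map_zero, smul_zero]

lemma relabel_mem_raisingOps_zero : relabel I ω a ∈ raisingOps K I 0 :=
  mem_raisingOps_of_forall_single fun w hw ↦ by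
    rw [← altWord_of_isChain hw, relabel_altWord]
    exact Submodule.smul_mem _ _ (altWord_mem_wordFiltration (by simp))

lemma relabel_mul_letterMul (i : I) :
    relabel I ω a * letterMul K i = ω a • (letterMul K (a • i) * relabel I ω a) := by
  refine end_ext_single fun w ↦ ?_
  rw [LinearMap.smul_apply, Module.End.mul_apply, Module.End.mul_apply, letterMul_single,
    relabel_altWord, relabel_single, ← Finsupp.smul_single_one, map_smul, letterMul_single,
    smul_smul, List.map_cons, List.length_cons, pow_succ']

lemma relabel_mul_unipotent_mul_relabel_inv (i : I) (x : K) :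
    relabel I ω a * unipotent i (.ofAdd x) * relabel I ω a⁻¹ =
      unipotent (a • i) (.ofAdd (x * ω a)) := by
  have hinv : relabel I ω a * relabel I ω a⁻¹ = 1 := by rw [← map_mul, mul_inv_cancel, map_one]
  simp only [unipotent_ofAdd, mul_add, add_mul, mul_one, mul_smul_comm, relabel_mul_letterMul,
    smul_mul_assoc, mul_assoc, hinv, mul_smul]

end Relabel

section NoInversion

variable {K A I : Type*} [CommRing K] [LinearOrder K] [IsStrictOrderedRing K] [Group A]
  [MulAction A I] {ω : A →* K} {a : A}

lemma isPeriodicPt_map_smul_iff {n : ℕ} {w : List I} :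
    Function.IsPeriodicPt (List.map (a • ·)) n w ↔ ∀ i ∈ w, a ^ n • i = i := by
  have hiter : (List.map fun i : I ↦ a • i)^[n] w = w.map (a ^ n • ·) := by
    induction n with
    | zero => simp
    | succ n ih =>
      rw [Function.iterate_succ_apply', ih, List.map_map]
      simp only [Function.comp_def, pow_succ', mul_smul]
  rw [Function.IsPeriodicPt, Function.IsFixedPt, hiter]
  exact ⟨fun h i hi ↦ List.map_eq_map_iff.mp (h.trans w.map_id.symm) i hi,
    fun h ↦ (List.map_congr_left h).trans w.map_id'⟩

/-- The degree `d` part of `f` is sent to its negative by a monomial operator with positive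
coefficients. -/
lemma mem_wordFiltration_succ_of_add_relabel_mem (hω : 0 < ω a)
    (ha : ∀ (n : ℕ) (i : I), (a ^ n) ^ 2 • i = i → a ^ n • i = i) {d : ℕ} {f : WordModule K I}
    (hf : f ∈ wordFiltration K I d) (hadd : f + relabel I ω a f ∈ wordFiltration K I (d + 1)) :
    f ∈ wordFiltration K I (d + 1) := by
  set g := f.filter fun w ↦ w.length = d
  have hg_apply (w : List I) : g w = if w.length = d then f w else 0 := Finsupp.filter_apply _ _ _
  have hg_sign (w : List I) : SignType.sign (g (w.map (a • ·))) = -SignType.sign (g w) := by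
    rw [hg_apply, hg_apply, List.length_map]
    split_ifs with hw
    · have hsum : f (w.map (a • ·)) + ω a ^ w.length * f w = 0 := by
        rw [← relabel_apply_map, ← Finsupp.add_apply]
        by_contra hne
        have := (mem_wordFiltration.mp hadd _ hne).2
        rw [List.length_map] at this
        omega
      rw [eq_neg_of_add_eq_zero_left hsum, Left.sign_neg, sign_mul, sign_pos (pow_pos hω _),
        one_mul]
    · simp
  have hg : g = 0 := by
    refine eq_zero_of_sign_apply_eq_neg_sign (map_smul_injective a) (fun n w h ↦ ?_) hg_sign
    rw [isPeriodicPt_map_smul_iff] at h ⊢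
    exact fun i hi ↦ ha n i (by rw [sq, ← pow_add, h i hi])
  refine mem_wordFiltration.mpr fun w hw ↦ ?_
  obtain ⟨hchain, hle⟩ := mem_wordFiltration.mp hf w hw
  refine ⟨hchain, hle.lt_of_ne' fun hd ↦ hw ?_⟩
  rw [← if_pos (c := w.length = d) (t := f w) (e := 0) hd, ← hg_apply, hg, Finsupp.zero_apply]

lemma anticommutator_eq_of_mul_mul_eq {R : Type*} [Ring R] {T S P : R}
    (h : (1 + T) * ((1 + S) * P) * (1 + T) = (1 + S) * P) :
    T * P + P * T = -(T * S * P + S * P * T + T * ((1 + S) * P) * T) := by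
  rw [← sub_eq_zero, ← sub_eq_zero.mpr h]
  noncomm_ring

/-- In lowest degree `h` reads `f + relabel I ω a f = 0`, where `f` is the lowest degree part of
`T`. -/
lemma mem_raisingOps_of_mul_mul_eq (hω : 0 < ω a)
    (ha : ∀ (n : ℕ) (i : I), (a ^ n) ^ 2 • i = i → a ^ n • i = i)
    {T S : Module.End K (WordModule K I)} (hT : T ∈ raisingOps K I 1) (hS : S ∈ raisingOps K I 1)
    (hT_comm : ∀ v, Commute T (mulWord K v))
    (h : (1 + T) * ((1 + S) * relabel I ω a) * (1 + T) = (1 + S) * relabel I ω a) (d : ℕ) :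
    T ∈ raisingOps K I (d + 1) := by
  have hP := relabel_mem_raisingOps_zero (I := I) ω a
  have hP_nil : relabel I ω a (Finsupp.single [] 1) = Finsupp.single [] 1 := by
    simp [relabel_single]
  have hanti := anticommutator_eq_of_mul_mul_eq (R := Module.End K (WordModule K I)) h
  set P := relabel I ω a
  have hSP : (1 + S) * P ∈ raisingOps K I 0 := by
    rw [add_mul, one_mul]
    exact Submodule.add_mem _ hP (mul_mem_raisingOps hS hP (Nat.zero_le _))
  induction d with
  | zero => exact hT
  | succ d ih =>
    have hrest : T * S * P + S * P * T + T * ((1 + S) * P) * T ∈ raisingOps K I (d + 1 + 1) := by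
      refine Submodule.add_mem _ (Submodule.add_mem _ ?_ ?_) ?_
      · exact mul_mem_raisingOps (mul_mem_raisingOps ih hS le_rfl) hP le_rfl
      · exact mul_mem_raisingOps (mul_mem_raisingOps hS hP le_rfl) ih (by omega)
      · exact mul_mem_raisingOps (mul_mem_raisingOps ih hSP le_rfl) ih (by omega)
    have hanti_mem : T * P + P * T ∈ raisingOps K I (d + 1 + 1) := by
      rw [hanti, ← neg_one_smul K]
      exact Submodule.smul_mem _ _ hrest
    refine mem_raisingOps_of_commute_mulWord hT_comm
      (mem_wordFiltration_succ_of_add_relabel_mem hω ha ?_ ?_)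
    · simpa only [zero_add] using mem_raisingOps.mp ih 0 _ single_nil_mem
    · have := mem_raisingOps.mp hanti_mem 0 _ single_nil_mem
      rwa [zero_add, LinearMap.add_apply, Module.End.mul_apply, Module.End.mul_apply, hP_nil]
        at this

theorem apply_single_nil_of_mul_mul_eq (hω : 0 < ω a)
    (ha : ∀ (n : ℕ) (i : I), (a ^ n) ^ 2 • i = i → a ^ n • i = i)
    {k z : Module.End K (WordModule K I)} (hk_mem : k ∈ oneAddMul K I) (hz : z ∈ oneAddMul K I)
    (hk : k * (z * relabel I ω a) * k = z * relabel I ω a) :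
    k (Finsupp.single [] 1) = Finsupp.single [] 1 := by
  obtain ⟨T, hT, hT_comm, rfl⟩ := hk_mem
  obtain ⟨S, hS, -, rfl⟩ := hz
  have hT_nil : T (Finsupp.single [] 1) = 0 := by
    refine eq_zero_of_forall_mem_wordFiltration fun d ↦ ?_
    have hraise := mem_raisingOps_of_mul_mul_eq hω ha hT hS hT_comm hk d
    exact wordFiltration_antitone (by omega) (mem_raisingOps.mp hraise 0 _ single_nil_mem)
  rw [LinearMap.add_apply, Module.End.one_apply, hT_nil, add_zero]

end NoInversion

universe u v

/-- The powers of two `ω a = 2 ^ χ a`. -/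
lemma exists_pos_weight {A : Type*} [Group A] {χ : A →* Multiplicative ℤ} {s : A}
    (hχ : χ s = .ofAdd 1) : ∃ ω : A →* ℚ, ω s = 2 ∧ ∀ a, 0 < ω a := by
  refine ⟨(Units.coeHom ℚ).comp ((zpowersHom ℚˣ (Units.mk0 2 two_ne_zero)).comp χ), ?_, ?_⟩
  · simp [hχ]
  · intro a
    simp only [MonoidHom.comp_apply, Units.coeHom_apply, zpowersHom_apply,
      Units.val_zpow_eq_zpow_val, Units.val_mk0]
    positivity

/-- `G` is presented over `A` by one more generator `t` and the Baumslag–Solitar relation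
`s t s⁻¹ = t ^ 2`. The presentation is encoded by its universal property. -/
structure IsBaumslagSolitarExtension {A : Type u} {G : Type v} [Group A] [Group G]
    (s : A) (ι : A →* G) (t : G) : Prop where
  conj_eq : ι s * t * (ι s)⁻¹ = t ^ 2
  closure_eq_top : Subgroup.closure (Set.range ι ∪ {t}) = ⊤
  exists_hom : ∀ {L : Type u} [Group L] (f : A →* L) (x : L), f s * x * (f s)⁻¹ = x ^ 2 →
    ∃ φ : G →* L, φ.comp ι = f ∧ φ t = x

namespace IsBaumslagSolitarExtension

variable {A : Type u} {G : Type v} [Group A] [Group G] {s : A} {ι : A →* G} {t : G}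

section Retraction

lemma exists_retraction (h : IsBaumslagSolitarExtension s ι t) :
    ∃ r : G →* A, r.comp ι = .id A ∧ r t = 1 :=
  h.exists_hom (.id A) 1 (by simp)

/-- The retraction of `G` onto `A` killing `t`. -/
noncomputable def retraction (h : IsBaumslagSolitarExtension s ι t) : G →* A :=
  h.exists_retraction.choose

variable (h : IsBaumslagSolitarExtension s ι t)

lemma retraction_apply (a : A) : h.retraction (ι a) = a :=
  DFunLike.congr_fun h.exists_retraction.choose_spec.1 a

lemma retraction_generator : h.retraction t = 1 := h.exists_retraction.choose_spec.2

end Retraction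

section ConjFactor

variable (h : IsBaumslagSolitarExtension s ι t)

include h in
lemma conj_pow_zpow (k : ℕ) (b : ℤ) :
    ι (s ^ k) * t ^ b * (ι (s ^ k))⁻¹ = t ^ (2 ^ k * b) := by
  induction k with
  | zero => simp
  | succ k ih =>
    calc ι (s ^ (k + 1)) * t ^ b * (ι (s ^ (k + 1)))⁻¹
        = ι s * (ι (s ^ k) * t ^ b * (ι (s ^ k))⁻¹) * (ι s)⁻¹ := by
          rw [pow_succ', map_mul]; group
      _ = t ^ (2 ^ (k + 1) * b) := by
          rw [ih, ← conj_zpow, h.conj_eq, ← zpow_natCast t 2, ← zpow_mul, pow_succ']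
          congr 1
          push_cast
          ring

include h in
lemma exists_common_conj {g g' : A} (hgg' : (g : A ⧸ Subgroup.zpowers s) = g') (b b' : ℤ) :
    ∃ (g₀ : A) (c c' : ℤ), (g₀ : A ⧸ Subgroup.zpowers s) = g ∧
      ι g * t ^ b * (ι g)⁻¹ = ι g₀ * t ^ c * (ι g₀)⁻¹ ∧
      ι g' * t ^ b' * (ι g')⁻¹ = ι g₀ * t ^ c' * (ι g₀)⁻¹ := by
  have hconj (g : A) (k : ℕ) (b : ℤ) :
      ι (g * s ^ k) * t ^ b * (ι (g * s ^ k))⁻¹ = ι g * t ^ (2 ^ k * b) * (ι g)⁻¹ := by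
    rw [← h.conj_pow_zpow, map_mul]; group
  obtain ⟨k, hk⟩ := Subgroup.mem_zpowers_iff.mp (QuotientGroup.eq.mp hgg')
  obtain ⟨n, rfl | rfl⟩ := k.eq_nat_or_neg
  · obtain rfl : g' = g * s ^ n := by rw [← zpow_natCast, hk, mul_inv_cancel_left]
    exact ⟨g, b, 2 ^ n * b', rfl, rfl, hconj g n b'⟩
  · obtain rfl : g = g' * s ^ n := by
      rw [← zpow_natCast, ← inv_inv (s ^ _), ← zpow_neg, hk]; group
    exact ⟨g', 2 ^ n * b, b', hgg'.symm, hconj g' n b, rfl⟩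

/-- The conjugates by `ι g`, where `g` runs over the coset `i`, of the powers of `t`. When `s` has
infinite order this group is isomorphic to `ℤ[1/2]`. -/
def conjFactor (i : A ⧸ Subgroup.zpowers s) : Subgroup G where
  carrier := {n | ∃ (g : A) (b : ℤ), (g : A ⧸ Subgroup.zpowers s) = i ∧
    n = ι g * t ^ b * (ι g)⁻¹}
  one_mem' := by
    obtain ⟨g, rfl⟩ := QuotientGroup.mk_surjective i
    exact ⟨g, 0, rfl, by simp⟩
  mul_mem' := by
    rintro _ _ ⟨g, b, rfl, rfl⟩ ⟨g', b', hg', rfl⟩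
    obtain ⟨g₀, c, c', hg₀, hc, hc'⟩ := h.exists_common_conj hg'.symm b b'
    exact ⟨g₀, c + c', hg₀, by rw [hc, hc', conj_mul, zpow_add]⟩
  inv_mem' := by
    rintro _ ⟨g, b, hg, rfl⟩
    exact ⟨g, -b, hg, by rw [conj_inv, zpow_neg]⟩

lemma conj_zpow_mem_iSup_conjFactor (g : A) (b : ℤ) :
    ι g * t ^ b * (ι g)⁻¹ ∈ ⨆ i, h.conjFactor i :=
  Subgroup.mem_iSup_of_mem (g : A ⧸ Subgroup.zpowers s) ⟨g, b, rfl, rfl⟩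

lemma conj_mem_iSup_conjFactor (a : A) {n : G} (hn : n ∈ ⨆ i, h.conjFactor i) :
    ι a * n * (ι a)⁻¹ ∈ ⨆ i, h.conjFactor i := by
  refine Subgroup.iSup_induction _ (C := fun n ↦ ι a * n * (ι a)⁻¹ ∈ ⨆ i, h.conjFactor i)
    hn ?_ (by simp) fun x y hx hy ↦ by rw [← conj_mul]; exact mul_mem hx hy
  rintro _ _ ⟨g, b, -, rfl⟩
  convert h.conj_zpow_mem_iSup_conjFactor (a * g) b using 1
  rw [map_mul]
  group

lemma exists_mul_apply_eq (x : G) : ∃ n ∈ ⨆ i, h.conjFactor i, ∃ a, n * ι a = x := by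
  have hx : x ∈ Subgroup.closure (Set.range ι ∪ {t}) := h.closure_eq_top ▸ Subgroup.mem_top x
  have ht (b : ℤ) : t ^ b ∈ ⨆ i, h.conjFactor i := by
    simpa using h.conj_zpow_mem_iSup_conjFactor 1 b
  induction hx using Subgroup.closure_induction_left with
  | one => exact ⟨1, one_mem _, 1, by simp⟩
  | mul_left x hx y _ ih =>
    obtain ⟨n, hn, a, rfl⟩ := ih
    obtain ⟨b, rfl⟩ | rfl := hx
    · exact ⟨_, h.conj_mem_iSup_conjFactor b hn, b * a, by rw [map_mul]; group⟩
    · exact ⟨x * n, mul_mem (by simpa using ht 1) hn, a, mul_assoc _ _ _⟩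
  | inv_mul_cancel x hx y _ ih =>
    obtain ⟨n, hn, a, rfl⟩ := ih
    obtain ⟨b, rfl⟩ | rfl := hx
    · exact ⟨_, h.conj_mem_iSup_conjFactor b⁻¹ hn, b⁻¹ * a, by rw [map_mul, map_inv]; group⟩
    · exact ⟨x⁻¹ * n, mul_mem (by simpa using ht (-1)) hn, a, mul_assoc _ _ _⟩

lemma ker_retraction_le_iSup_conjFactor : h.retraction.ker ≤ ⨆ i, h.conjFactor i := by
  intro x hx
  obtain ⟨n, hn, a, rfl⟩ := h.exists_mul_apply_eq x
  have hle : ⨆ i, h.conjFactor i ≤ h.retraction.ker := iSup_le fun i ↦ by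
    rintro _ ⟨g, b, -, rfl⟩
    simp [MonoidHom.mem_ker, retraction_generator]
  rw [MonoidHom.mem_ker, map_mul, MonoidHom.mem_ker.mp (hle hn), one_mul, retraction_apply] at hx
  rwa [hx, map_one, mul_one]

end ConjFactor

section MagnusRep

variable {ω : A →* ℚ}

lemma exists_magnusRep (h : IsBaumslagSolitarExtension s ι t) (hω : ω s = 2) :
    ∃ ρ : G →* Module.End ℚ (WordModule ℚ (A ⧸ Subgroup.zpowers s)),
      (∀ a, ρ (ι a) = relabel _ ω a) ∧
        ρ t = unipotent (QuotientGroup.mk 1) (.ofAdd 1) := by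
  let i₀ : A ⧸ Subgroup.zpowers s := QuotientGroup.mk 1
  have hi₀ : s • i₀ = i₀ :=
    QuotientGroup.eq.mpr (by simp)
  have hrel : relabel _ ω s * unipotent i₀ (.ofAdd 1) * relabel _ ω s⁻¹ =
      unipotent i₀ (.ofAdd 1) ^ 2 := by
    rw [relabel_mul_unipotent_mul_relabel_inv, hi₀, hω, ← map_pow, ← ofAdd_nsmul]
    norm_num
  obtain ⟨φ, hφι, hφt⟩ := h.exists_hom (relabel (A ⧸ Subgroup.zpowers s) ω).toHomUnits
    ((unipotent i₀).toHomUnits (.ofAdd 1)) (Units.ext (by simpa [← map_inv] using hrel))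
  refine ⟨(Units.coeHom _).comp φ, fun a ↦ ?_, by simp [hφt, i₀]⟩
  exact congrArg Units.val (DFunLike.congr_fun hφι a)

/-- The Magnus representation of `G`: `A` permutes the letters, which are the cosets of `⟨s⟩`, up to
the weight `ω`, and `t` acts as `1 + ⟨s⟩`. -/
noncomputable def magnusRep (h : IsBaumslagSolitarExtension s ι t) (hω : ω s = 2) :
    G →* Module.End ℚ (WordModule ℚ (A ⧸ Subgroup.zpowers s)) :=
  (h.exists_magnusRep hω).choose

variable (h : IsBaumslagSolitarExtension s ι t) (hω : ω s = 2)

lemma magnusRep_apply (a : A) : h.magnusRep hω (ι a) = relabel _ ω a :=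
  (h.exists_magnusRep hω).choose_spec.1 a

lemma magnusRep_generator_zpow (b : ℤ) :
    h.magnusRep hω (t ^ b) = unipotent (QuotientGroup.mk 1) (.ofAdd (b : ℚ)) := by
  have hb : Multiplicative.ofAdd (b : ℚ) = .ofAdd 1 ^ b := by rw [← ofAdd_zsmul, zsmul_one]
  have ht : (h.magnusRep hω).toHomUnits t =
      (unipotent (QuotientGroup.mk 1)).toHomUnits (.ofAdd 1) :=
    Units.ext (h.exists_magnusRep hω).choose_spec.2
  have hzpow := congrArg (· ^ b) ht
  simp only [← map_zpow, ← hb] at hzpow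
  exact congrArg Units.val hzpow

lemma magnusRep_eq_unipotent {i : A ⧸ Subgroup.zpowers s} {n : G} (hn : n ∈ h.conjFactor i)
    (hn1 : n ≠ 1) : ∃ x ≠ 0, h.magnusRep hω n = unipotent i (.ofAdd x) := by
  obtain ⟨g, b, rfl, rfl⟩ := hn
  have hb : b ≠ 0 := by rintro rfl; simp at hn1
  have hωg : ω g ≠ 0 := (ω.toHomUnits g).ne_zero
  refine ⟨b * ω g, mul_ne_zero (Int.cast_ne_zero.mpr hb) hωg, ?_⟩
  rw [map_mul, map_mul, ← map_inv, magnusRep_apply, magnusRep_apply, magnusRep_generator_zpow,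
    relabel_mul_unipotent_mul_relabel_inv]
  simp

lemma magnusRep_mem_oneAddMul {n : G} (hn : n ∈ ⨆ i, h.conjFactor i) :
    h.magnusRep hω n ∈ oneAddMul ℚ (A ⧸ Subgroup.zpowers s) := by
  refine Subgroup.iSup_induction _ (C := fun n ↦ h.magnusRep hω n ∈ oneAddMul ℚ _) hn
    (fun i n hn ↦ ?_) (map_one (h.magnusRep hω) ▸ one_mem _)
    fun x y hx hy ↦ map_mul (h.magnusRep hω) x y ▸ mul_mem hx hy
  obtain rfl | hn1 := eq_or_ne n 1
  · exact map_one (h.magnusRep hω) ▸ one_mem _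
  · obtain ⟨x, -, hx⟩ := h.magnusRep_eq_unipotent hω hn hn1
    exact hx ▸ unipotent_mem_oneAddMul i _

lemma eq_one_of_magnusRep_single_nil {n : G} (hn : n ∈ ⨆ i, h.conjFactor i)
    (hfix : h.magnusRep hω n (Finsupp.single [] 1) = Finsupp.single [] 1) : n = 1 := by
  have hrange : n ∈ (Monoid.CoprodI.lift fun i ↦ (h.conjFactor i).subtype).range := by
    rw [Monoid.CoprodI.range_eq_iSup]
    simpa only [Subgroup.range_subtype] using hn
  obtain ⟨z, rfl⟩ := hrange
  have hz : z = 1 := by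
    refine eq_one_of_apply_single_nil (ψ := (h.magnusRep hω).comp (Monoid.CoprodI.lift _))
      (fun i m hm ↦ ?_) hfix
    rw [MonoidHom.comp_apply, Monoid.CoprodI.lift_of]
    exact h.magnusRep_eq_unipotent hω m.2 (Subtype.coe_ne_coe.mpr hm)
  rw [hz, map_one]

end MagnusRep

theorem sq_injective (h : IsBaumslagSolitarExtension s ι t) {χ : A →* Multiplicative ℤ}
    (hχ : χ s = .ofAdd 1) (hA : Function.Injective fun a : A ↦ a ^ 2) :
    Function.Injective fun x : G ↦ x ^ 2 := by
  refine sq_injective_iff_forall_mul_mul_eq.mpr fun x y hxy ↦ ?_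
  have hx_ker : x ∈ h.retraction.ker :=
    sq_injective_iff_forall_mul_mul_eq.mp hA _ (h.retraction y) (by rw [← map_mul, ← map_mul, hxy])
  have hx := h.ker_retraction_le_iSup_conjFactor hx_ker
  obtain ⟨n, hn, a, rfl⟩ := h.exists_mul_apply_eq y
  obtain ⟨ω, hω, hω_pos⟩ := exists_pos_weight hχ
  refine h.eq_one_of_magnusRep_single_nil hω hx <|
    apply_single_nil_of_mul_mul_eq (hω_pos a) (fun _ _ ↦ smul_eq_of_sq_smul_eq hA hχ)
      (h.magnusRep_mem_oneAddMul hω hx) (h.magnusRep_mem_oneAddMul hω hn) ?_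
  rw [← h.magnusRep_apply hω, ← map_mul, ← map_mul, ← map_mul, hxy]

end IsBaumslagSolitarExtension

section Presentation

lemma Gp.relation {n i : ℕ} (hi : i + 2 ≤ n) :
    (PresentedGroup.of ⟨i + 1, by omega⟩ : Gp n) *
        (PresentedGroup.of ⟨i, by omega⟩ * PresentedGroup.of ⟨i + 2, by omega⟩) *
        (PresentedGroup.of ⟨i + 1, by omega⟩)⁻¹ =
      (PresentedGroup.of ⟨i, by omega⟩ * PresentedGroup.of ⟨i + 2, by omega⟩) ^ 2 :=
  mul_inv_eq_one.mp (PresentedGroup.one_of_mem ⟨i, hi, rfl⟩)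

lemma Gp.exists_hom {n : ℕ} {L : Type*} [Group L] (F : ℕ → L)
    (hF : ∀ i, i + 2 ≤ n → F (i + 1) * (F i * F (i + 2)) * (F (i + 1))⁻¹ = (F i * F (i + 2)) ^ 2) :
    ∃ φ : Gp n →* L, ∀ i (hi : i < n + 1), φ (PresentedGroup.of ⟨i, hi⟩) = F i := by
  have hrel : ∀ r ∈ grels n, FreeGroup.lift (fun i : Fin (n + 1) ↦ F i) r = 1 := by
    rintro _ ⟨i, hi, rfl⟩
    rw [map_mul, map_inv, mul_inv_eq_one]
    simpa using hF i hi
  exact ⟨PresentedGroup.toGroup hrel, fun _ _ ↦ PresentedGroup.toGroup.of hrel⟩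

/-- A sign pattern with `ε (i + 2) = -ε i`, the condition for `aᵢ ↦ ε i` to define a homomorphism
from `Gₙ` to `ℤ`. -/
def periodFourSign (i : ℕ) : ℤ := if i % 4 < 2 then 1 else -1

lemma periodFourSign_add_two (i : ℕ) : periodFourSign (i + 2) = -periodFourSign i := by
  unfold periodFourSign
  split_ifs <;> omega

lemma periodFourSign_mul_self (i : ℕ) : periodFourSign i * periodFourSign i = 1 := by
  unfold periodFourSign
  split_ifs <;> rfl

lemma Gp.exists_character {n : ℕ} (i : Fin (n + 1)) :
    ∃ χ : Gp n →* Multiplicative ℤ, χ (PresentedGroup.of i) = .ofAdd 1 := by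
  obtain ⟨χ, hχ⟩ := Gp.exists_hom (n := n)
    (fun j ↦ Multiplicative.ofAdd (periodFourSign i * periodFourSign j)) fun j _ ↦ by
      simp [periodFourSign_add_two]
  exact ⟨χ, by rw [hχ, periodFourSign_mul_self]⟩

lemma Gp.sq_injective_of_le_one {n : ℕ} (hn : n ≤ 1) :
    Function.Injective fun x : Gp n ↦ x ^ 2 := by
  have hgrels : grels n = ∅ := Set.eq_empty_of_forall_notMem fun r ⟨i, hi, _⟩ ↦ by omega
  have hmk : Function.Injective (PresentedGroup.mk (grels n)) := by
    refine (injective_iff_map_eq_one _).mpr fun w hw ↦ ?_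
    rwa [PresentedGroup.mk_eq_one_iff, hgrels, Subgroup.normalClosure_empty, Subgroup.mem_bot] at hw
  intro x y hxy
  obtain ⟨v, rfl⟩ := PresentedGroup.mk_surjective _ x
  obtain ⟨w, rfl⟩ := PresentedGroup.mk_surjective _ y
  simp only [← map_pow] at hxy
  rw [IsMulTorsionFree.pow_left_injective two_ne_zero (hmk hxy)]

lemma Gp.exists_map_succ (n : ℕ) : ∃ ι : Gp n →* Gp (n + 1),
    ∀ i (hi : i < n + 1), ι (PresentedGroup.of ⟨i, hi⟩) = PresentedGroup.of ⟨i, by omega⟩ := by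
  obtain ⟨ι, hι⟩ := Gp.exists_hom (n := n)
    (fun i ↦ if h : i < n + 2 then (PresentedGroup.of ⟨i, h⟩ : Gp (n + 1)) else 1) fun i hi ↦ by
      simpa only [show i < n + 2 by omega, show i + 1 < n + 2 by omega,
        show i + 2 < n + 2 by omega, dif_pos] using Gp.relation (n := n + 1) (by omega)
  exact ⟨ι, fun i hi ↦ by rw [hι, dif_pos]⟩

lemma Gp.exists_hom_extending {m : ℕ} {L : Type*} [Group L] (f : Gp (m + 1) →* L) (x : L)
    (hx : f (PresentedGroup.of ⟨m + 1, by omega⟩) * x *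
      (f (PresentedGroup.of ⟨m + 1, by omega⟩))⁻¹ = x ^ 2) :
    ∃ φ : Gp (m + 2) →* L,
      (∀ i (hi : i < m + 2), φ (PresentedGroup.of ⟨i, by omega⟩) = f (PresentedGroup.of ⟨i, hi⟩)) ∧
      φ (PresentedGroup.of ⟨m, by omega⟩ * PresentedGroup.of ⟨m + 2, by omega⟩) = x := by
  obtain ⟨φ, hφ⟩ := Gp.exists_hom (n := m + 2)
    (fun i ↦ if h : i < m + 2 then f (PresentedGroup.of ⟨i, h⟩) else
      (f (PresentedGroup.of ⟨m, by omega⟩))⁻¹ * x) fun i hi ↦ by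
    obtain hlt | rfl := (Nat.le_of_add_le_add_right hi).lt_or_eq
    · simp only [show i < m + 2 by omega, show i + 1 < m + 2 by omega,
        show i + 2 < m + 2 by omega, dif_pos]
      simpa only [map_mul, map_inv, map_pow] using congrArg f (Gp.relation (n := m + 1) (by omega))
    · simpa using hx
  exact ⟨φ, fun i hi ↦ by rw [hφ, dif_pos], by simp [hφ]⟩

lemma Gp.closure_range_union_eq_top {m : ℕ} {ι : Gp (m + 1) →* Gp (m + 2)}
    (hι : ∀ i (hi : i < m + 2), ι (PresentedGroup.of ⟨i, hi⟩) = PresentedGroup.of ⟨i, by omega⟩) :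
    Subgroup.closure (Set.range ι ∪
      {PresentedGroup.of ⟨m, by omega⟩ * PresentedGroup.of ⟨m + 2, by omega⟩}) = ⊤ := by
  set H := Subgroup.closure (Set.range ι ∪
    {PresentedGroup.of ⟨m, by omega⟩ * PresentedGroup.of ⟨m + 2, by omega⟩})
  have hold (i : ℕ) (hi : i < m + 2) : (PresentedGroup.of ⟨i, by omega⟩ : Gp (m + 2)) ∈ H :=
    Subgroup.subset_closure (.inl ⟨_, hι i hi⟩)
  refine eq_top_iff.mpr fun x _ ↦ PresentedGroup.generated_by _ H ?_ x
  rintro ⟨j, hj⟩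
  obtain hlt | rfl := (Nat.le_of_lt_succ hj).lt_or_eq
  · exact hold j hlt
  · exact (Subgroup.mul_mem_cancel_left H (hold m (by omega))).mp
      (Subgroup.subset_closure (.inr rfl))

theorem Gp.isBaumslagSolitarExtension {m : ℕ} {ι : Gp (m + 1) →* Gp (m + 2)}
    (hι : ∀ i (hi : i < m + 2), ι (PresentedGroup.of ⟨i, hi⟩) = PresentedGroup.of ⟨i, by omega⟩) :
    IsBaumslagSolitarExtension (PresentedGroup.of ⟨m + 1, by omega⟩) ι
      (PresentedGroup.of ⟨m, by omega⟩ * PresentedGroup.of ⟨m + 2, by omega⟩) where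
  conj_eq := by
    rw [hι]
    exact Gp.relation (n := m + 2) (i := m) le_rfl
  closure_eq_top := Gp.closure_range_union_eq_top hι
  exists_hom f x hx := by
    obtain ⟨φ, hφ, hφt⟩ := Gp.exists_hom_extending f x hx
    have hφι : φ.comp ι = f := PresentedGroup.ext fun ⟨i, hi⟩ ↦ by
      rw [MonoidHom.comp_apply, hι i hi, hφ i hi]
    exact ⟨φ, hφι, hφt⟩

theorem Gp.sq_injective : ∀ n : ℕ, Function.Injective fun x : Gp n ↦ x ^ 2
  | 0 => Gp.sq_injective_of_le_one zero_le_one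
  | 1 => Gp.sq_injective_of_le_one le_rfl
  | m + 2 => by
    obtain ⟨ι, hι⟩ := Gp.exists_map_succ (m + 1)
    obtain ⟨χ, hχ⟩ := Gp.exists_character (n := m + 1) ⟨m + 1, by omega⟩
    exact (Gp.isBaumslagSolitarExtension hι).sq_injective hχ (Gp.sq_injective (m + 1))

end Presentation

end CondC

open CondC in
theorem cp_Y_cq_ne_inv_general (n : ℕ) (i : Fin (n + 1)) (Y : Gp n)
    (hY : ∀ k : ℤ, Y ≠ PresentedGroup.of i ^ k) (p q : ℤ) :
    PresentedGroup.of i ^ p * Y * PresentedGroup.of i ^ q ≠ Y⁻¹ := by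
  obtain ⟨χ, hχ⟩ := Gp.exists_character i
  refine zpow_mul_mul_zpow_ne_inv (Gp.sq_injective n) hχ (fun hmem ↦ ?_) p q
  obtain ⟨k, hk⟩ := Subgroup.mem_zpowers_iff.mp hmem
  exact hY k hk.symm

open CondC in
/-- For `n ≥ 1`, regard `G_{n-1}` as the subgroup of `Gₙ` generated by `a₀, …, a_{n-1}`
and set `c = a_{n-1}`.  For every `Y` in that subgroup which is not a power of `c`, and
all integers `p, q`, we have `c^p Y c^q ≠ Y⁻¹` in `Gₙ`. -/
theorem cp_Y_cq_ne_inv (n : ℕ) (hn : 1 ≤ n)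
    (c : Gp n) (hc : c = PresentedGroup.of ⟨n - 1, by omega⟩)
    (Y : Gp n)
    (hY : Y ∈ Subgroup.closure {g : Gp n | ∃ (i : ℕ) (h : i < n),
      g = PresentedGroup.of ⟨i, by omega⟩})
    (hYc : ∀ k : ℤ, Y ≠ c ^ k) (p q : ℤ) :
    c ^ p * Y * c ^ q ≠ Y⁻¹ := by
  subst hc
  exact cp_Y_cq_ne_inv_general n _ Y hYc p q
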